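/- Let U : ℝ⁴ → ℝ⁴ be C¹ with covariant components U_β and raised components U^α = η_αU_α (η₀ = −1, ηᵢ = 1), let ρ : ℝ⁴ → ℝ be C¹ and nonnegative, and let F : ℝ⁴ → ℝ^{4×4} be continuous with F_{αβ} = −F_{βα}. Assume on ℝ⁴: the normalization −U₀² + Σ_{i=1}^3 U_i² = −1, the Euler equation Σ_α U^α ∂_α U_β = Σ_α U^α F_{αβ} for each β, and the continuity equation Σ_α ∂_α(U^α ρ) = 0. Let μ be the measure on ℝ⁴ × ℝ⁴ obtained as the pushforward, under the map x ↦ (x, U(x)), of Lebesgue measure on ℝ⁴ with density ρ. Then: (i) the support of μ is contained in ℝ⁴ × {ξ ∈ ℝ⁴ : −ξ₀² + Σᵢξᵢ² = −1} (the mass shell); and (ii) for every smooth compactly supported a : ℝ⁴ × ℝ⁴ → ℝ (variables (x, ξ)), ∫ [ Σ_α η_α ξ_α (∂a/∂x^α)(x, ξ) + Σ_{α,β} η_α ξ_α F_{αβ}(x) (∂a/∂ξ_β)(x, ξ) ] dμ(x, ξ) = 0, i.e. (F, μ) is a weak solution of the relativistic massive Vlasov–Maxwell transport equation. -/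

import Mathlib

open MeasureTheory

noncomputable def pdR (f : (Fin 4 → ℝ) → ℝ) (α : Fin 4) (x : Fin 4 → ℝ) : ℝ :=
  fderiv ℝ f x (Pi.single α 1)

/-- The Minkowski signs: `η₀ = −1`, `ηᵢ = 1`. -/
noncomputable def eta : Fin 4 → ℝ := fun α => if α = 0 then -1 else 1

/-- Proposition 7.1: a solution `(U, F, ρ)` of the relativistic Euler-Maxwell equations
gives, via the monokinetic measure `μ = ρ δ_{U=ξ} ⊗ Λ` (the pushforward of `ρ·Lebesgue`
under `x ↦ (x, U(x))`), a weak solution of the relativistic massive Vlasov-Maxwell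
equations: `μ` is supported on the mass shell and satisfies the weak transport
equation `∫ ξ^α ∂_{x^α}a + ξ^α F_{αβ} ∂_{ξ_β}a dμ = 0`. -/
theorem stmt13 (U : (Fin 4 → ℝ) → Fin 4 → ℝ) (hU : ContDiff ℝ 1 U)
    (ρ : (Fin 4 → ℝ) → ℝ) (hρ : ContDiff ℝ 1 ρ) (hρpos : ∀ x, 0 ≤ ρ x)
    (F : (Fin 4 → ℝ) → Fin 4 → Fin 4 → ℝ) (hFc : Continuous F)
    (hanti : ∀ x (α β : Fin 4), F x α β = - F x β α)
    (hnorm : ∀ x, - (U x 0) ^ 2 + (U x 1) ^ 2 + (U x 2) ^ 2 + (U x 3) ^ 2 = -1)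
    (hEuler : ∀ x (β : Fin 4), ∑ α : Fin 4, eta α * U x α * pdR (fun y => U y β) α x
        = ∑ α : Fin 4, eta α * U x α * F x α β)
    (hcont : ∀ x, ∑ α : Fin 4, pdR (fun y => eta α * U y α * ρ y) α x = 0)
    (μ : Measure ((Fin 4 → ℝ) × (Fin 4 → ℝ)))
    (hμ : μ = Measure.map (fun x => (x, U x))
        (volume.withDensity (fun x => ENNReal.ofReal (ρ x)))) :
    (μ {p : (Fin 4 → ℝ) × (Fin 4 → ℝ) |
        - (p.2 0) ^ 2 + (p.2 1) ^ 2 + (p.2 2) ^ 2 + (p.2 3) ^ 2 ≠ -1} = 0) ∧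
    (∀ a : ((Fin 4 → ℝ) × (Fin 4 → ℝ)) → ℝ, ContDiff ℝ (⊤ : ℕ∞) a → HasCompactSupport a →
      ∫ p, ((∑ α : Fin 4, eta α * p.2 α * fderiv ℝ a p (Pi.single α 1, 0))
        + ∑ α : Fin 4, ∑ β : Fin 4,
            eta α * p.2 α * F p.1 α β * fderiv ℝ a p (0, Pi.single β 1)) ∂μ = 0) := by
  have hUc : Continuous U := hU.continuous
  have hm : Measurable (fun x => (x, U x)) := (continuous_id.prodMk hUc).measurable
  subst hμ
  constructor
  · rw [Measure.map_apply hm]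
    · simp [hnorm]
    · apply MeasurableSet.compl (s := {p : (Fin 4 → ℝ) × (Fin 4 → ℝ) |
        - (p.2 0) ^ 2 + (p.2 1) ^ 2 + (p.2 2) ^ 2 + (p.2 3) ^ 2 = -1})
      apply IsClosed.measurableSet
      exact isClosed_eq (by fun_prop) (by fun_prop)
  · intro a ha hac
    have hac1 : ContDiff ℝ 1 a := ha.of_le (by exact_mod_cast le_top)
    have hda : Continuous (fderiv ℝ a) := hac1.continuous_fderiv (by simp)
    rw [integral_map hm.aemeasurable]
    swap
    · apply Continuous.aestronglyMeasurable
      fun_prop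
    rw [integral_withDensity_eq_integral_toReal_smul hρ.continuous.measurable.ennreal_ofReal (by simp)]
    set b : (Fin 4 → ℝ) → ℝ := fun x => a (x, U x) with hb
    have hb1 : ContDiff ℝ 1 b := hac1.comp (contDiff_id.prodMk hU)
    have hbs : HasCompactSupport b := by
      apply HasCompactSupport.intro (hac.isCompact.image continuous_fst)
      intro x hx
      by_contra h
      exact hx ⟨(x, U x), subset_tsupport _ h, rfl⟩
    have hdb : Continuous (fderiv ℝ b) := hb1.continuous_fderiv (by simp)
    have hg1 : ∀ α, ContDiff ℝ 1 (fun y => eta α * U y α * ρ y) := by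
      intro α
      have : ContDiff ℝ 1 (fun y => U y α) := contDiff_pi.1 hU α
      fun_prop
    have key : ∀ α x, pdR b α x = fderiv ℝ a (x, U x) (Pi.single α 1, 0)
        + ∑ β, pdR (fun y => U y β) α x * fderiv ℝ a (x, U x) (0, Pi.single β 1) := by
      intro α x
      have hUd : HasFDerivAt U (fderiv ℝ U x) x :=
        (hU.differentiable (by simp) x).hasFDerivAt
      have h1 : HasFDerivAt b ((fderiv ℝ a (x, U x)).comp
          ((ContinuousLinearMap.id ℝ _).prod (fderiv ℝ U x))) x :=
        HasFDerivAt.comp (f := fun x => (x, U x)) x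
          (hac1.differentiable (by simp) (x, U x)).hasFDerivAt
          ((hasFDerivAt_id x).prodMk hUd)
      have h2 : ∀ β, pdR (fun y => U y β) α x = fderiv ℝ U x (Pi.single α 1) β := by
        intro β
        have := (hasFDerivAt_pi'.1 hUd β).fderiv
        simp only [pdR, this]
        rfl
      simp only [h2]
      simp only [pdR, h1.fderiv, ContinuousLinearMap.comp_apply, ContinuousLinearMap.prod_apply,
        ContinuousLinearMap.id_apply]
      generalize fderiv ℝ U x (Pi.single α 1) = v
      have h3 : ((Pi.single α 1 : Fin 4 → ℝ), v) = (Pi.single α 1, 0)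
          + ∑ β, v β • ((0 : Fin 4 → ℝ), (Pi.single β 1 : Fin 4 → ℝ)) := by
        refine Prod.ext ?_ ?_
        · simp [Prod.fst_sum]
        · ext i
          simp [Prod.snd_sum, Finset.sum_apply, Pi.single_apply]
      rw [h3, map_add, map_sum]
      simp only [map_smul, smul_eq_mul]
    have hpt : ∀ x, (ENNReal.ofReal (ρ x)).toReal •
        ((∑ α : Fin 4, eta α * U x α * fderiv ℝ a (x, U x) (Pi.single α 1, 0))
        + ∑ α : Fin 4, ∑ β : Fin 4,
            eta α * U x α * F x α β * fderiv ℝ a (x, U x) (0, Pi.single β 1))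
        = ∑ α, (eta α * U x α * ρ x) * fderiv ℝ b x (Pi.single α 1) := by
      intro x
      have h4 : ∑ α : Fin 4, ∑ β : Fin 4,
            eta α * U x α * F x α β * fderiv ℝ a (x, U x) (0, Pi.single β 1)
          = ∑ α : Fin 4, ∑ β : Fin 4, eta α * U x α * pdR (fun y => U y β) α x
             * fderiv ℝ a (x, U x) (0, Pi.single β 1) := by
        rw [Finset.sum_comm]
        conv_rhs => rw [Finset.sum_comm]
        refine Finset.sum_congr rfl fun β _ => ?_
        rw [← Finset.sum_mul, ← Finset.sum_mul, hEuler]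
      rw [h4, ENNReal.toReal_ofReal (hρpos x), ← Finset.sum_add_distrib, smul_eq_mul,
        Finset.mul_sum]
      refine Finset.sum_congr rfl fun α _ => ?_
      have := key α x
      simp only [pdR] at this ⊢
      rw [this, mul_add, mul_add, Finset.mul_sum, Finset.mul_sum]
      congr 1
      · ring
      · exact Finset.sum_congr rfl fun β _ => by ring
    simp only [hpt]
    have hbd : ∀ v, HasCompactSupport (fun x => fderiv ℝ b x v) := fun v =>
      hbs.fderiv_apply ℝ v
    have i1 : ∀ α, Integrable (fun x => (eta α * U x α * ρ x) * fderiv ℝ b x (Pi.single α 1)) :=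
      fun α => Continuous.integrable_of_hasCompactSupport
        ((hg1 α).continuous.mul (by fun_prop)) (hbd _).mul_left
    have i2 : ∀ α, Integrable (fun x =>
        fderiv ℝ (fun y => eta α * U y α * ρ y) x (Pi.single α 1) * b x) :=
      fun α => Continuous.integrable_of_hasCompactSupport
        (by
          have := (hg1 α).continuous_fderiv (by simp)
          have := hb1.continuous
          fun_prop) hbs.mul_left
    have i3 : ∀ α, Integrable (fun x => (eta α * U x α * ρ x) * b x) :=
      fun α => Continuous.integrable_of_hasCompactSupport
        ((hg1 α).continuous.mul hb1.continuous) hbs.mul_left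
    rw [integral_finsetSum _ (fun α _ => i1 α)]
    have hp : ∀ α, ∫ x, (eta α * U x α * ρ x) * fderiv ℝ b x (Pi.single α 1)
        = - ∫ x, fderiv ℝ (fun y => eta α * U y α * ρ y) x (Pi.single α 1) * b x := fun α =>
      integral_mul_fderiv_eq_neg_fderiv_mul_of_integrable (i2 α) (i1 α) (i3 α)
        (fun x _ => (hg1 α).differentiable (by simp) x)
        (fun x _ => hb1.differentiable (by simp) x)
    simp only [hp]
    rw [Finset.sum_neg_distrib, ← integral_finsetSum _ (fun α _ => i2 α)]
    simp only [← Finset.sum_mul]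
    have h0 : ∀ x, ∑ α, fderiv ℝ (fun y => eta α * U y α * ρ y) x (Pi.single α 1) = 0 := hcont
    simp [h0]
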